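/- The nonreciprocal clustering method H^NR satisfies the Axiom of Value (A1) and the Axiom of Transformation (A2). That is: (i) for the two-node network Δ₂(α,β) = ({p,q}, A) with A(p,q) = α, A(q,p) = β, α,β > 0, the nonreciprocal ultrametric satisfies u^NR(p,q) = max(α,β); and (ii) for any two networks (X, A_X) and (Y, A_Y) and any map φ : X → Y with A_X(x,x') ≥ A_Y(φ(x),φ(x')) for all x,x' ∈ X, the nonreciprocal ultrametrics satisfy u^NR_X(x,x') ≥ u^NR_Y(φ(x),φ(x')) for all x,x' ∈ X. -/

import Mathlib

noncomputable section

/-- A dissimilarity function on a node set: nonnegative and zero exactly on the diagonal.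
It need not be symmetric nor satisfy the triangle inequality. -/
def IsDissim {X : Type} (A : X → X → ℝ) : Prop :=
  (∀ x x', 0 ≤ A x x') ∧ (∀ x x', A x x' = 0 ↔ x = x')

/-- A symmetric dissimilarity. -/
def IsSym {X : Type} (A : X → X → ℝ) : Prop := ∀ x x', A x x' = A x' x

/-- An ultrametric: nonnegative, zero exactly on the diagonal, symmetric, and
satisfying the strong triangle inequality. -/
def IsUltrametric {X : Type} (u : X → X → ℝ) : Prop :=
  (∀ x x', 0 ≤ u x x') ∧ (∀ x x', u x x' = 0 ↔ x = x') ∧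
    (∀ x x', u x x' = u x' x) ∧
    (∀ x x' x'', u x x'' ≤ max (u x x') (u x' x''))

/-- The cost of the chain `x :: l`: the maximum dissimilarity over consecutive links. -/
def chainCost {X : Type} (A : X → X → ℝ) : X → List X → ℝ
  | _, [] => 0
  | x, y :: l => max (A x y) (chainCost A y l)

/-- The set of costs of chains from `x` to `x'`. -/
def chainCosts {X : Type} (A : X → X → ℝ) (x x' : X) : Set ℝ :=
  {c | ∃ l : List X, (x :: l).getLast (List.cons_ne_nil x l) = x' ∧ chainCost A x l = c}

/-- The directed minimum chain cost `ũ*_X(x,x')`: minimum cost over all chains from `x` to `x'`. -/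
def minChainCost {X : Type} (A : X → X → ℝ) (x x' : X) : ℝ :=
  sInf (chainCosts A x x')

/-- The nonreciprocal ultrametric `u^NR`. -/
def nonrecipUltra {X : Type} (A : X → X → ℝ) (x x' : X) : ℝ :=
  max (minChainCost A x x') (minChainCost A x' x)

/-- The reciprocal ultrametric `u^R`. -/
def recipUltra {X : Type} (A : X → X → ℝ) (x x' : X) : ℝ :=
  minChainCost (fun a b => max (A a b) (A b a)) x x'

/-- The unilateral ultrametric `u^U`. -/
def uniUltra {X : Type} (A : X → X → ℝ) (x x' : X) : ℝ :=
  minChainCost (fun a b => min (A a b) (A b a)) x x'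

/-- The minimum loop cost `mlc(X, A_X)`: minimum cost over loops, i.e. chains from some
node `x` back to itself containing at least one node different from `x`. -/
def mlc {X : Type} (A : X → X → ℝ) : ℝ :=
  sInf {c | ∃ (x : X) (l : List X),
    (x :: l).getLast (List.cons_ne_nil x l) = x ∧ (∃ y ∈ l, y ≠ x) ∧ chainCost A x l = c}

/-- The separation `sep(X, A_X)`: minimum dissimilarity over pairs of distinct nodes. -/
def sep {X : Type} (A : X → X → ℝ) : ℝ :=
  sInf {c | ∃ x x' : X, x ≠ x' ∧ A x x' = c}

/-- A hierarchical clustering method: assigns to every (finite) network an output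
two-variable function on the same node set. -/
abbrev HCMethod := ∀ (X : Type) [Fintype X], (X → X → ℝ) → X → X → ℝ

/-- A hierarchical clustering method outputs an ultrametric on every network. -/
def IsHCMethod (H : HCMethod) : Prop :=
  ∀ (X : Type) [Fintype X] (A : X → X → ℝ), IsDissim A → IsUltrametric (H X A)

/-- `p, q` are the two (distinct) nodes of a two-node set. -/
def TwoNode {X : Type} (p q : X) : Prop := p ≠ q ∧ ∀ x : X, x = p ∨ x = q

/-- Axiom of Value (A1): on every two-node network the output clusters the two nodes at
the maximum of the two dissimilarities. -/
def AxiomValue (H : HCMethod) : Prop :=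
  ∀ (X : Type) [Fintype X] (p q : X), TwoNode p q →
    ∀ A : X → X → ℝ, IsDissim A → H X A p q = max (A p q) (A q p)

/-- Axiom of Transformation (A2): dissimilarity-reducing maps do not increase output values. -/
def AxiomTransform (H : HCMethod) : Prop :=
  ∀ (X Y : Type) [Fintype X] [Fintype Y] (AX : X → X → ℝ) (AY : Y → Y → ℝ),
    IsDissim AX → IsDissim AY →
    ∀ φ : X → Y, (∀ x x', AY (φ x) (φ x') ≤ AX x x') →
    ∀ x x' : X, H Y AY (φ x) (φ x') ≤ H X AX x x'

/-- The canonical dissimilarity `A_{n,α,β}` on `Fin n`: `α` for `i > j`, `β` for `i < j`,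
`0` on the diagonal. -/
def canonDissim (n : ℕ) (α β : ℝ) : Fin n → Fin n → ℝ :=
  fun i j => if i = j then 0 else if j < i then α else β

/-- Extended Axiom of Value (A1'): on every permuted canonical network `Δ_n(α,β,Π)` the
output ultrametric equals `max(α,β)` off the diagonal. -/
def ExtAxiomValue (H : HCMethod) : Prop :=
  ∀ (n : ℕ) (α β : ℝ), 0 < α → 0 < β → ∀ π : Equiv.Perm (Fin n),
    ∀ i j : Fin n, i ≠ j →
      H (Fin n) (fun i j => canonDissim n α β (π i) (π j)) i j = max α β

/-- Alternative Axiom of Value (A1''): on every two-node network the output clusters the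
two nodes at the minimum of the two dissimilarities. -/
def AltAxiomValue (H : HCMethod) : Prop :=
  ∀ (X : Type) [Fintype X] (p q : X), TwoNode p q →
    ∀ A : X → X → ℝ, IsDissim A → H X A p q = min (A p q) (A q p)

/-- Agnostic Axiom of Value (A1'''): on every two-node network the output value lies
between the minimum and maximum of the two dissimilarities. -/
def AgnAxiomValue (H : HCMethod) : Prop :=
  ∀ (X : Type) [Fintype X] (p q : X), TwoNode p q →
    ∀ A : X → X → ℝ, IsDissim A →
      min (A p q) (A q p) ≤ H X A p q ∧ H X A p q ≤ max (A p q) (A q p)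

/-! Every chain from inside a set `S` of nodes to outside it has a link crossing out of `S`, so its
cost is at least that of the cheapest crossing link. With `S = {p}`, no chain to a node nearest to
`p` beats the direct link. A map that does not increase dissimilarities carries each chain to a
chain of at most the same cost, so it does not increase minimum chain costs either. -/

section Chains

variable {X Y : Type} {A : X → X → ℝ}

variable (A) in
theorem chainCost_nonneg (x : X) (l : List X) : 0 ≤ chainCost A x l := by
  induction l generalizing x with
  | nil => exact le_rfl
  | cons y l ih => exact le_max_of_le_right (ih y)

theorem minChainCost_le_chainCost {x x' : X} {l : List X}
    (hl : (x :: l).getLast (List.cons_ne_nil x l) = x') :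
    minChainCost A x x' ≤ chainCost A x l := by
  refine csInf_le ⟨0, ?_⟩ ⟨l, hl, rfl⟩
  rintro _ ⟨k, -, rfl⟩
  exact chainCost_nonneg A x k

theorem le_minChainCost {x x' : X} {c : ℝ}
    (h : ∀ l, (x :: l).getLast (List.cons_ne_nil x l) = x' → c ≤ chainCost A x l) :
    c ≤ minChainCost A x x' := by
  refine le_csInf ⟨_, [x'], rfl, rfl⟩ ?_
  rintro _ ⟨l, hl, rfl⟩
  exact h l hl

theorem minChainCost_le_of_nonneg {x x' : X} (h : 0 ≤ A x x') : minChainCost A x x' ≤ A x x' :=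
  calc
    minChainCost A x x' ≤ chainCost A x [x'] := minChainCost_le_chainCost rfl
    _ = A x x' := max_eq_left h

theorem le_chainCost_of_cut {S : Set X} {c : ℝ} (hS : ∀ a ∈ S, ∀ b ∉ S, c ≤ A a b) {x : X}
    {l : List X} (hx : x ∈ S) (hl : (x :: l).getLast (List.cons_ne_nil x l) ∉ S) :
    c ≤ chainCost A x l := by
  induction l generalizing x with
  | nil => exact absurd hx hl
  | cons y l ih =>
    by_cases hy : y ∈ S
    · exact le_max_of_le_right (ih hy hl)
    · exact le_max_of_le_left (hS x hx y hy)

theorem le_minChainCost_of_cut {S : Set X} {c : ℝ} (hS : ∀ a ∈ S, ∀ b ∉ S, c ≤ A a b) {x x' : X}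
    (hx : x ∈ S) (hx' : x' ∉ S) : c ≤ minChainCost A x x' :=
  le_minChainCost fun _ hl => le_chainCost_of_cut hS hx (hl ▸ hx')

theorem minChainCost_eq_of_forall_ne_le {p q : X} (hpq : p ≠ q) (hnonneg : 0 ≤ A p q)
    (hmin : ∀ x ≠ p, A p q ≤ A p x) : minChainCost A p q = A p q := by
  have hcut : ∀ a ∈ ({p} : Set X), ∀ b ∉ ({p} : Set X), A p q ≤ A a b := by
    rintro _ rfl b hb
    exact hmin b hb
  exact (minChainCost_le_of_nonneg hnonneg).antisymm (le_minChainCost_of_cut hcut rfl hpq.symm)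

variable {B : Y → Y → ℝ} {φ : X → Y}

theorem chainCost_map_le (hφ : ∀ x x', B (φ x) (φ x') ≤ A x x') (x : X) (l : List X) :
    chainCost B (φ x) (l.map φ) ≤ chainCost A x l := by
  induction l generalizing x with
  | nil => exact le_rfl
  | cons y l ih => exact max_le_max (hφ x y) (ih y)

theorem minChainCost_map_le (hφ : ∀ x x', B (φ x) (φ x') ≤ A x x') (x x' : X) :
    minChainCost B (φ x) (φ x') ≤ minChainCost A x x' := by
  refine le_minChainCost ?_
  rintro l rfl
  have hlast : (φ x :: l.map φ).getLast (List.cons_ne_nil _ _) =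
      φ ((x :: l).getLast (List.cons_ne_nil x l)) :=
    List.getLast_map (l := x :: l) (by simp)
  exact (minChainCost_le_chainCost hlast).trans (chainCost_map_le hφ x l)

end Chains

theorem TwoNode.symm {X : Type} {p q : X} (h : TwoNode p q) : TwoNode q p :=
  ⟨h.1.symm, fun x => (h.2 x).symm⟩

theorem TwoNode.eq_of_ne {X : Type} {p q x : X} (h : TwoNode p q) (hx : x ≠ p) : x = q :=
  (h.2 x).resolve_left hx

theorem nonrecip_admissible_general :
    (∀ (X : Type) (p q : X) (A : X → X → ℝ), p ≠ q → 0 ≤ A p q → 0 ≤ A q p →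
        (∀ x ≠ p, A p q ≤ A p x) → (∀ x ≠ q, A q p ≤ A q x) →
        nonrecipUltra A p q = max (A p q) (A q p)) ∧
    (∀ (X Y : Type) (AX : X → X → ℝ) (AY : Y → Y → ℝ) (φ : X → Y),
        (∀ x x', AY (φ x) (φ x') ≤ AX x x') →
        ∀ x x' : X, nonrecipUltra AY (φ x) (φ x') ≤ nonrecipUltra AX x x') := by
  constructor
  · intro X p q A hpq hpq_nonneg hqp_nonneg hp hq
    rw [nonrecipUltra, minChainCost_eq_of_forall_ne_le hpq hpq_nonneg hp,
      minChainCost_eq_of_forall_ne_le hpq.symm hqp_nonneg hq]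
  · intro X Y AX AY φ hφ x x'
    exact max_le_max (minChainCost_map_le hφ x x') (minChainCost_map_le hφ x' x)

/-- Nonreciprocal clustering satisfies the Axiom of Value (A1) and the Axiom of
Transformation (A2). -/
theorem nonrecip_admissible :
    (∀ (X : Type) [Fintype X] (p q : X), TwoNode p q →
        ∀ A : X → X → ℝ, IsDissim A → nonrecipUltra A p q = max (A p q) (A q p)) ∧
    (∀ (X Y : Type) [Fintype X] [Fintype Y]
        (AX : X → X → ℝ) (AY : Y → Y → ℝ), IsDissim AX → IsDissim AY →
        ∀ φ : X → Y, (∀ x x', AY (φ x) (φ x') ≤ AX x x') →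
        ∀ x x' : X, nonrecipUltra AY (φ x) (φ x') ≤ nonrecipUltra AX x x') := by
  constructor
  · intro X _ p q h A hA
    exact nonrecip_admissible_general.1 X p q A h.1 (hA.1 p q) (hA.1 q p)
      (fun _ hx => h.eq_of_ne hx ▸ le_rfl) (fun _ hx => h.symm.eq_of_ne hx ▸ le_rfl)
  · intro X Y _ _ AX AY _ _
    exact nonrecip_admissible_general.2 X Y AX AY
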